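/- (Theorem 2, HierMNL.) Let I, J, 𝓜, K, Q be finite nonempty sets (origins, destinations, modes, destination attributes, mode attributes), Ō_i > 0 given origin totals, and X^k_{ij}, X^q_{ijm} real attributes. Suppose strictly positive probabilities p_{j/i} > 0 and p_{m/ij} > 0 with Σ_j p_{j/i} = 1 for each i and Σ_m p_{m/ij} = 1 for each (i,j), together with multipliers 1/θ_j, 1/θ_m (with θ_j, θ_m > 0), β_k (k∈K), β_q (q∈Q), λ_i, μ_{ij}, satisfy the first-order stationarity conditions of the Lagrangian of problem HierMNL: (i) −(1/θ_j)[Ō_i(ln p_{j/i}+1)] − (1/θ_m)[Ō_i Σ_m p_{m/ij} ln p_{m/ij}] + Ō_i Σ_k β_k X^k_{ij} + Ō_i Σ_m p_{m/ij} Σ_q β_q X^q_{ijm} + λ_i = 0 for all i,j; and (ii) −(1/θ_m)[Ō_i p_{j/i}(ln p_{m/ij}+1)] + Ō_i p_{j/i} Σ_q β_q X^q_{ijm} + μ_{ij} = 0 for all i,j,m. Then p_{m/ij} = exp(θ_m Σ_q β_q X^q_{ijm}) / Σ_{m'} exp(θ_m Σ_q β_q X^q_{ijm'}) and p_{j/i}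 = exp(θ_j [Σ_k β_k X^k_{ij} + S_{ij}]) / Σ_{j'} exp(θ_j [Σ_k β_k X^k_{ij'} + S_{ij'}]), where S_{ij} = (1/θ_m) ln Σ_m exp(θ_m Σ_q β_q X^q_{ijm}). -/

import Mathlib

open Real Finset

/-!
Dividing a stationarity condition by its weight shows that the log-probability of an alternative
is its scaled utility plus a constant, and normalization determines the constant. This settles the
mode level. At its logit solution, the mode part of the destination condition, expected utility
plus scaled entropy, is exactly the satisfaction `S j`, so the destination condition has the same
shape with utility `v j + S j`.
-/

/-- The multinomial logit probabilities (softmax) of a finite family of utilities. -/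
noncomputable def logitProb {A : Type*} [Fintype A] (u : A → ℝ) (a : A) : ℝ :=
  exp (u a) / ∑ b, exp (u b)

/-- The satisfaction (log-sum, or inclusive value) of a finite set of alternatives with utilities
`u` and scale `θ`; it is the utility that the set contributes to the upper choice level. -/
noncomputable def satisfaction {A : Type*} [Fintype A] (θ : ℝ) (u : A → ℝ) : ℝ :=
  (1 / θ) * log (∑ a, exp (θ * u a))

section Logit

variable {A : Type*} [Fintype A]

theorem sum_exp_pos [Nonempty A] (u : A → ℝ) : 0 < ∑ a, exp (u a) :=
  sum_pos (fun _ _ => exp_pos _) univ_nonempty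

theorem sum_logitProb [Nonempty A] (u : A → ℝ) : ∑ a, logitProb u a = 1 := by
  simp only [logitProb, ← sum_div]
  exact div_self (sum_exp_pos u).ne'

theorem log_logitProb (u : A → ℝ) (a : A) :
    log (logitProb u a) = u a - log (∑ b, exp (u b)) := by
  have : Nonempty A := ⟨a⟩
  rw [logitProb, log_div (exp_pos _).ne' (sum_exp_pos u).ne', log_exp]

theorem sum_logitProb_mul_log [Nonempty A] (u : A → ℝ) :
    ∑ a, logitProb u a * log (logitProb u a) =
      ∑ a, logitProb u a * u a - log (∑ a, exp (u a)) := by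
  simp only [log_logitProb, mul_sub, sum_sub_distrib, ← sum_mul, sum_logitProb, one_mul]

theorem expected_utility_sub_sum_mul_log_eq_satisfaction [Nonempty A] {θ : ℝ} (hθ : θ ≠ 0)
    (u : A → ℝ) :
    ∑ a, logitProb (fun a => θ * u a) a * u a -
        (1 / θ) * ∑ a, logitProb (fun a => θ * u a) a * log (logitProb (fun a => θ * u a) a) =
      satisfaction θ u := by
  simp only [sum_logitProb_mul_log, satisfaction, mul_left_comm _ θ, ← mul_sum]
  field_simp
  ring

theorem eq_logitProb_of_log_eq_add_const {p u : A → ℝ} {c : ℝ} (hp : ∀ a, 0 < p a)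
    (hsum : ∑ a, p a = 1) (hlog : ∀ a, log (p a) = u a + c) : p = logitProb u := by
  have hp_eq (a : A) : p a = exp (u a) * exp c := by
    rw [← exp_add, ← hlog, exp_log (hp a)]
  have hnorm : (∑ a, exp (u a)) * exp c = 1 := by
    simpa only [hp_eq, ← sum_mul] using hsum
  funext a
  rw [hp_eq, logitProb, eq_inv_of_mul_eq_one_right hnorm, div_eq_mul_inv]

theorem eq_logitProb_of_stationary {p u : A → ℝ} {θ w c : ℝ} (hθ : θ ≠ 0) (hw : w ≠ 0)
    (hp : ∀ a, 0 < p a) (hsum : ∑ a, p a = 1)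
    (hstat : ∀ a, -(1 / θ) * (w * (log (p a) + 1)) + w * u a + c = 0) :
    p = logitProb fun a => θ * u a := by
  refine eq_logitProb_of_log_eq_add_const (c := θ * c / w - 1) hp hsum fun a => ?_
  have := hstat a
  field_simp at this ⊢
  linear_combination -this

end Logit

/-- The conditions at a single origin of total `w`, for arbitrary utilities: every destination `j`
has its own set `M j` of modes and its own scale `θm j`. -/
theorem hierMNL_stationarity_general {J : Type*} {M : J → Type*} [Fintype J]
    [∀ j, Fintype (M j)] {w θj lam : ℝ} {θm μ v p : J → ℝ} {u r : ∀ j, M j → ℝ}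
    (hw : w ≠ 0) (hθj : θj ≠ 0) (hθm : ∀ j, θm j ≠ 0)
    (hp : ∀ j, 0 < p j) (hr : ∀ j m, 0 < r j m)
    (hsump : ∑ j, p j = 1) (hsumr : ∀ j, ∑ m, r j m = 1)
    (hstatp : ∀ j,
      -(1 / θj) * (w * (log (p j) + 1)) - (1 / θm j) * (w * ∑ m, r j m * log (r j m))
        + w * v j + w * ∑ m, r j m * u j m + lam = 0)
    (hstatr : ∀ j m,
      -(1 / θm j) * (w * p j * (log (r j m) + 1)) + w * p j * u j m + μ j = 0) :
    (∀ j, r j = logitProb fun m => θm j * u j m) ∧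
      p = logitProb fun j => θj * (v j + satisfaction (θm j) (u j)) := by
  have hr_eq (j : J) : r j = logitProb fun m => θm j * u j m :=
    eq_logitProb_of_stationary (hθm j) (mul_ne_zero hw (hp j).ne') (hr j) (hsumr j) (hstatr j)
  refine ⟨hr_eq, eq_logitProb_of_stationary hθj hw hp hsump (c := lam) fun j => ?_⟩
  have : Nonempty (M j) :=
    univ_nonempty_iff.1 (nonempty_of_sum_ne_zero ((hsumr j).trans_ne one_ne_zero))
  have hsat := expected_utility_sub_sum_mul_log_eq_satisfaction (hθm j) (u j)
  rw [← hr_eq j] at hsat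
  linear_combination hstatp j - w * hsat

/-- Theorem 2, HierMNL. First-order stationarity of the Lagrangian
of problem `HierMNL` implies the hierarchical multinomial logit formulas for the
destination and mode choice probabilities. -/
theorem hierMNL_stationarity
    {I J Mo K Q : Type*} [Fintype I] [Nonempty I] [Fintype J] [Nonempty J]
    [Fintype Mo] [Nonempty Mo] [Fintype K] [Nonempty K] [Fintype Q] [Nonempty Q]
    (O : I → ℝ) (hO : ∀ i, 0 < O i)
    (Xk : I → J → K → ℝ) (Xq : I → J → Mo → Q → ℝ)
    (pj : I → J → ℝ) (pm : I → J → Mo → ℝ)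
    (hpj : ∀ i j, 0 < pj i j) (hpm : ∀ i j m, 0 < pm i j m)
    (hsumj : ∀ i, ∑ j, pj i j = 1) (hsumm : ∀ i j, ∑ m, pm i j m = 1)
    (θj θm : ℝ) (hθj : 0 < θj) (hθm : 0 < θm)
    (βk : K → ℝ) (βq : Q → ℝ) (lam : I → ℝ) (μ : I → J → ℝ)
    (hstat1 : ∀ i j,
      -(1 / θj) * (O i * (Real.log (pj i j) + 1))
      - (1 / θm) * (O i * ∑ m, pm i j m * Real.log (pm i j m))
      + O i * ∑ k, βk k * Xk i j k
      + O i * ∑ m, pm i j m * ∑ q, βq q * Xq i j m q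
      + lam i = 0)
    (hstat2 : ∀ i j m,
      -(1 / θm) * (O i * pj i j * (Real.log (pm i j m) + 1))
      + O i * pj i j * ∑ q, βq q * Xq i j m q
      + μ i j = 0) :
    (∀ i j m, pm i j m =
      Real.exp (θm * ∑ q, βq q * Xq i j m q) /
        ∑ m', Real.exp (θm * ∑ q, βq q * Xq i j m' q)) ∧
    (∀ i j, pj i j =
      Real.exp (θj * ((∑ k, βk k * Xk i j k) +
          (1 / θm) * Real.log (∑ m, Real.exp (θm * ∑ q, βq q * Xq i j m q)))) /
        ∑ j', Real.exp (θj * ((∑ k, βk k * Xk i j' k) +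
          (1 / θm) * Real.log (∑ m, Real.exp (θm * ∑ q, βq q * Xq i j' m q))))) := by
  have h (i : I) := hierMNL_stationarity_general (hO i).ne' hθj.ne' (fun _ => hθm.ne') (hpj i)
    (hpm i) (hsumj i) (hsumm i) (hstat1 i) (hstat2 i)
  exact ⟨fun i j => congrFun ((h i).1 j), fun i => congrFun (h i).2⟩
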